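/- Fix n, d ∈ ℕ, 1 < p < ∞, T > 0, x ∈ ℝ^n, and smooth vector fields X_0, X_1, …, X_d : ℝ^n → ℝ^n that are bounded and have bounded first and second derivatives. Let F : L^p([0,T], ℝ^d) → ℝ^n be the endpoint map F(u) = γ_u(T), where γ_u is the trajectory of u starting at x. Fix u ∈ L^p([0,T], ℝ^d), set A_u(s) = DX_0(γ_u(s)) + Σ_{i=1}^d u_i(s)·DX_i(γ_u(s)) (an n×n-matrix-valued integrable function, where DX_i denotes the Jacobian matrix), and let N : [0,T] → ℝ^{n×n} be the unique continuous matrix-valued function satisfying N(t) = I + ∫_t^T N(s)A_u(s) ds for all t ∈ [0,T]. Then F is Fréchet differentiable at u and its differential is the bounded linear map d_uF(v) = ∫_0^T N(s)·( Σ_{i=1}^d v_i(s) X_i(γ_u(s)) ) ds for v = (v_1, …, v_d) ∈ L^p([0,T], ℝ^d). -/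

import Mathlib

open MeasureTheory Set

noncomputable section

/-- Trajectory on `[0,T]` of a control `u` starting at `x` for the affine control system
determined by `X₀, X₁, …, X_d`. -/
def IsTrajectory {n d : ℕ}
    (X0 : EuclideanSpace ℝ (Fin n) → EuclideanSpace ℝ (Fin n))
    (X : Fin d → EuclideanSpace ℝ (Fin n) → EuclideanSpace ℝ (Fin n))
    (x : EuclideanSpace ℝ (Fin n)) (T : ℝ)
    (u : ℝ → EuclideanSpace ℝ (Fin d))
    (γ : ℝ → EuclideanSpace ℝ (Fin n)) : Prop :=
  ContinuousOn γ (Set.Icc 0 T) ∧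
    ∀ t ∈ Set.Icc (0:ℝ) T,
      γ t = x + ∫ s in (0:ℝ)..t, (X0 (γ s) + ∑ i, u s i • X i (γ s))

/-
A Grönwall estimate bounds the deviation `δ` of the trajectory of a perturbed control `w` from the
trajectory `γ` of `u` by a constant times the `L¹` norm of `w - u`. Expanding the vector fields
along `γ` therefore shows that `δ` solves `δ' = A_u δ + ∑ᵢ (wᵢ - uᵢ) Xᵢ(γ) + ρ` with
`‖ρ‖_{L¹} = O(‖w - u‖²_{L¹})`. The backward resolvent `N` eliminates `δ` from the right-hand side:
inserting its integral equation and exchanging the order of integration over the triangle `s < t`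
gives `δ(T) = ∫ N (δ' - A_u δ)`. Hence `δ(T) = ∫ N ∑ᵢ (wᵢ - uᵢ) Xᵢ(γ) + O(‖w - u‖²_{L¹})`, and on a
bounded interval the `L¹` norm is dominated by the `Lᵖ` norm.
-/

open scoped NNReal ENNReal

section Integration

theorem absolutelyContinuousOnInterval_comp_lipschitzOnWith {Y Z : Type*} [PseudoMetricSpace Y]
    [PseudoMetricSpace Z] {f : ℝ → Y} {g : Y → Z} {K : ℝ≥0} {S : Set Y} {a b : ℝ}
    (hg : LipschitzOnWith K g S) (hf : AbsolutelyContinuousOnInterval f a b)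
    (hfS : MapsTo f (uIcc a b) S) : AbsolutelyContinuousOnInterval (g ∘ f) a b := by
  rw [absolutelyContinuousOnInterval_iff] at hf ⊢
  intro ε hε
  obtain ⟨δ, hδ, h⟩ := hf (ε / (K + 1)) (by positivity)
  refine ⟨δ, hδ, fun I hI hIδ => ?_⟩
  have hle : ∑ i ∈ Finset.range I.1, dist (g (f (I.2 i).1)) (g (f (I.2 i).2)) ≤
      K * ∑ i ∈ Finset.range I.1, dist (f (I.2 i).1) (f (I.2 i).2) := by
    rw [Finset.mul_sum]
    exact Finset.sum_le_sum fun i hi =>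
      hg.dist_le_mul _ (hfS (hI.1 i hi).1) _ (hfS (hI.1 i hi).2)
  calc _ ≤ K * ∑ i ∈ Finset.range I.1, dist (f (I.2 i).1) (f (I.2 i).2) := hle
    _ ≤ K * (ε / (K + 1)) := by gcongr; exact (h I hI hIδ).le
    _ < (K + 1) * (ε / (K + 1)) := by gcongr; exact lt_add_one _
    _ = ε := by field_simp

theorem lipschitzOnWith_exp_Iic (B : ℝ) :
    LipschitzOnWith (Real.toNNReal (Real.exp B)) Real.exp (Iic B) :=
  (convex_Iic B).lipschitzOnWith_of_nnnorm_deriv_le (𝕜 := ℝ)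
    (fun z _ => Real.differentiable_exp z) fun z hz => by
      rw [Real.deriv_exp, ← NNReal.coe_le_coe, coe_nnnorm, Real.norm_of_nonneg (Real.exp_nonneg z),
        Real.coe_toNNReal _ (Real.exp_nonneg B)]
      exact Real.exp_le_exp.2 hz

theorem absolutelyContinuousOnInterval_exp_comp {f : ℝ → ℝ} {a b : ℝ}
    (hf : AbsolutelyContinuousOnInterval f a b) :
    AbsolutelyContinuousOnInterval (fun t => Real.exp (f t)) a b := by
  obtain ⟨B, hB⟩ := (isCompact_uIcc.image_of_continuousOn hf.continuousOn).bddAbove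
  have hfB : MapsTo f (uIcc a b) (Iic B) := fun t ht => hB (mem_image_of_mem f ht)
  exact absolutelyContinuousOnInterval_comp_lipschitzOnWith (g := Real.exp)
    (lipschitzOnWith_exp_Iic B) hf hfB

/- Multiplying the right-hand side of the hypothesis by `exp (-∫ k)` makes it nonincreasing. -/
theorem le_mul_exp_integral_of_le_add_integral {φ k : ℝ → ℝ} {a b c : ℝ}
    (hk : IntervalIntegrable k volume a b)
    (hkφ : IntervalIntegrable (fun s => k s * φ s) volume a b) (hk0 : ∀ s ∈ Icc a b, 0 ≤ k s)
    (h : ∀ t ∈ Icc a b, φ t ≤ c + ∫ s in a..t, k s * φ s) {t : ℝ} (ht : t ∈ Icc a b) :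
    φ t ≤ c * Real.exp (∫ s in a..t, k s) := by
  have hsub : uIcc a t ⊆ uIcc a b := uIcc_subset_uIcc_left (Icc_subset_uIcc ht)
  have hk' := hk.mono_set hsub
  have hkφ' := hkφ.mono_set hsub
  set H : ℝ → ℝ := fun r => c + ∫ s in a..r, k s * φ s with hH
  set P : ℝ → ℝ := fun r => Real.exp (-∫ s in a..r, k s) with hP
  have hHac : AbsolutelyContinuousOnInterval H a t :=
    (LipschitzWith.const c).lipschitzOnWith.absolutelyContinuousOnInterval.fun_add
      (hkφ'.absolutelyContinuousOnInterval_intervalIntegral left_mem_uIcc)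
  have hPac : AbsolutelyContinuousOnInterval P a t := absolutelyContinuousOnInterval_exp_comp
    (hk'.absolutelyContinuousOnInterval_intervalIntegral left_mem_uIcc).fun_neg
  have hderiv : ∀ᵐ r, r ∈ Ioc a t → deriv (fun r => H r * P r) r ≤ 0 := by
    filter_upwards [hk'.ae_hasDerivAt_integral, hkφ'.ae_hasDerivAt_integral] with r hkr hkφr hr
    have hr' : r ∈ uIcc a t := Icc_subset_uIcc (Ioc_subset_Icc_self hr)
    have hrb : r ∈ Icc a b := ⟨hr.1.le, hr.2.trans ht.2⟩
    have hHr : HasDerivAt H (k r * φ r) r := (hkφr hr' a left_mem_uIcc).const_add c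
    have hPr : HasDerivAt P (P r * -k r) r := (hkr hr' a left_mem_uIcc).fun_neg.exp
    rw [(hHr.fun_mul hPr).deriv]
    calc k r * φ r * P r + H r * (P r * -k r) = k r * P r * (φ r - H r) := by ring
      _ ≤ 0 := mul_nonpos_of_nonneg_of_nonpos (mul_nonneg (hk0 r hrb) (Real.exp_nonneg _))
          (sub_nonpos.2 (h r hrb))
  have hHP : H t * P t ≤ c := by
    have hint : ∫ r in a..t, deriv (fun r => H r * P r) r = H t * P t - c := by
      rw [(hHac.fun_mul hPac).integral_deriv_eq_sub]
      simp [hH, hP]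
    have hnonpos : ∫ r in a..t, deriv (fun r => H r * P r) r ≤ 0 := by
      rw [intervalIntegral.integral_of_le ht.1]
      exact setIntegral_nonpos_ae measurableSet_Ioc hderiv
    linarith
  calc φ t ≤ H t := h t ht
    _ = H t * P t * Real.exp (∫ s in a..t, k s) := by
      rw [mul_assoc, hP, ← Real.exp_add, neg_add_cancel, Real.exp_zero, mul_one]
    _ ≤ c * Real.exp (∫ s in a..t, k s) := by gcongr

theorem intervalIntegrable_bilin {E F G : Type*} [NormedAddCommGroup E] [NormedSpace ℝ E]
    [NormedAddCommGroup F] [NormedSpace ℝ F] [NormedAddCommGroup G] [NormedSpace ℝ G]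
    (B : E →L[ℝ] F →L[ℝ] G) {a b : ℝ} {f : ℝ → E} {g : ℝ → F} (hf : ContinuousOn f (uIcc a b))
    (hg : IntervalIntegrable g volume a b) :
    IntervalIntegrable (fun s => B (f s) (g s)) volume a b := by
  rw [intervalIntegrable_iff'] at hg ⊢
  obtain ⟨C, hC⟩ := isCompact_uIcc.exists_bound_of_continuousOn hf
  exact B.integrable_of_bilin_of_bdd_left C (hf.aestronglyMeasurable measurableSet_uIcc)
    ((ae_restrict_mem measurableSet_uIcc).mono hC) hg

theorem integral_integral_clm_apply_eq {E F : Type*} [NormedAddCommGroup E] [NormedSpace ℝ E]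
    [CompleteSpace E] [NormedAddCommGroup F] [NormedSpace ℝ F] [CompleteSpace F] {a b : ℝ}
    (hab : a ≤ b) {B : ℝ → E →L[ℝ] F} {g : ℝ → E} (hB : IntervalIntegrable B volume a b)
    (hg : IntervalIntegrable g volume a b) :
    ∫ s in a..b, (∫ t in s..b, B t) (g s) = ∫ t in a..b, B t (∫ s in a..t, g s) := by
  rw [intervalIntegrable_iff_integrableOn_Ioc_of_le hab] at hB hg
  let Δ : Set (ℝ × ℝ) := {z | z.1 < z.2}
  let Φ : ℝ × ℝ → F := Δ.indicator fun z => B z.2 (g z.1)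
  have hΦ : Integrable Φ ((volume.restrict (Ioc a b)).prod (volume.restrict (Ioc a b))) :=
    (hg.op_fst_snd (op := fun y (L : E →L[ℝ] F) => L y) (by fun_prop)
      ⟨1, fun y L => by simpa [mul_comm] using L.le_opNorm y⟩ hB).indicator
      (measurableSet_lt measurable_fst measurable_snd)
  have hleft : ∀ s ∈ Ioc a b, (∫ t in s..b, B t) (g s) = ∫ t in Ioc a b, Φ (s, t) := by
    intro s hs
    have hset : Ioc s b = Ioc a b ∩ Ioi s := by
      rw [Ioc_inter_Ioi, sup_eq_right.2 hs.1.le]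
    rw [intervalIntegral.integral_of_le hs.2,
      ContinuousLinearMap.integral_apply (hB.mono_set (Ioc_subset_Ioc_left hs.1.le)), hset,
      ← setIntegral_indicator measurableSet_Ioi]
    rfl
  have hright : ∀ t ∈ Ioc a b, B t (∫ s in a..t, g s) = ∫ s in Ioc a b, Φ (s, t) := by
    intro t ht
    have hset : Ioo a t = Ioc a b ∩ Iio t := by
      ext r
      simp only [mem_Ioo, mem_inter_iff, mem_Ioc, mem_Iio]
      grind
    rw [intervalIntegral.integral_of_le ht.1.le, ← ContinuousLinearMap.integral_comp_comm _
      (hg.mono_set (Ioc_subset_Ioc_right ht.2)), integral_Ioc_eq_integral_Ioo, hset,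
      ← setIntegral_indicator measurableSet_Iio]
    rfl
  rw [intervalIntegral.integral_of_le hab, intervalIntegral.integral_of_le hab,
    setIntegral_congr_fun measurableSet_Ioc hleft, setIntegral_congr_fun measurableSet_Ioc hright]
  exact integral_integral_swap hΦ

variable {α V E : Type*} [MeasurableSpace α] {μ : Measure α} {p : ℝ≥0∞} [Fact (1 ≤ p)]
  [NormedAddCommGroup V]

theorem exists_forall_integral_norm_le_mul_norm_Lp [IsFiniteMeasure μ] :
    ∃ C : ℝ, ∀ v : Lp V p μ, ∫ x, ‖v x‖ ∂μ ≤ C * ‖v‖ := by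
  set c : ℝ≥0∞ := μ univ ^ (1 / (1 : ℝ≥0∞).toReal - 1 / p.toReal)
  have hp : (1 : ℝ≥0∞) ≤ p := Fact.out
  have hc_top : c ≠ ∞ := by
    refine ENNReal.rpow_ne_top_of_nonneg ?_ (measure_ne_top μ univ)
    rw [ENNReal.toReal_one, one_div_one, sub_nonneg, one_div]
    rcases eq_or_ne p ∞ with rfl | hp_top
    · simp
    · exact inv_le_one_of_one_le₀ ((ENNReal.toReal_one ▸ ENNReal.toReal_mono hp_top hp))
  refine ⟨c.toReal, fun v => ?_⟩
  have hv := (Lp.memLp v).aestronglyMeasurable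
  rw [Lp.norm_def, integral_norm_eq_lintegral_enorm hv, ← eLpNorm_one_eq_lintegral_enorm,
    ← ENNReal.toReal_mul, mul_comm]
  exact ENNReal.toReal_mono (ENNReal.mul_ne_top (Lp.eLpNorm_ne_top v) hc_top)
    (eLpNorm_le_eLpNorm_mul_rpow_measure_univ hp hv)

theorem exists_clm_Lp_eq_integral_of_memLp [NormedSpace ℝ V] [NormedAddCommGroup E]
    [NormedSpace ℝ E] [CompleteSpace E] {q : ℝ≥0∞} [Fact (1 ≤ q)] [q.HolderConjugate p]
    {M : α → V →L[ℝ] E} (hM : MemLp M q μ) :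
    ∃ D : Lp V p μ →L[ℝ] E, ∀ v, D v = ∫ x, M x (v x) ∂μ := by
  refine ⟨(ContinuousLinearMap.id ℝ (V →L[ℝ] E)).lpPairing μ q p hM.toLp, fun v => ?_⟩
  rw [ContinuousLinearMap.lpPairing_eq_integral]
  refine integral_congr_ae ?_
  filter_upwards [hM.coeFn_toLp] with x hx
  rw [hx, ContinuousLinearMap.id_apply]

end Integration

section SmoothMaps

variable {E G : Type*} [NormedAddCommGroup E] [NormedSpace ℝ E] [NormedAddCommGroup G]
  [NormedSpace ℝ G]

/-- Maps of class `C^{1,1}` with quantitative constants: differentiable and globally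
`K`-Lipschitz, with globally `L`-Lipschitz derivative. This is the regularity of vector fields
under which solutions are compared to second order. -/
structure IsC11With (K L : ℝ≥0) (f : E → G) : Prop where
  differentiable : Differentiable ℝ f
  lipschitzWith : LipschitzWith K f
  lipschitzWith_fderiv : LipschitzWith L (fderiv ℝ f)

theorem IsC11With.norm_sub_sub_fderiv_le {K L : ℝ≥0} {f : E → G} (hf : IsC11With K L f)
    (x y : E) : ‖f y - f x - fderiv ℝ f x (y - x)‖ ≤ L * ‖y - x‖ ^ 2 := by
  have hbound : ∀ z ∈ Metric.closedBall x ‖y - x‖,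
      ‖fderiv ℝ f z - fderiv ℝ f x‖ ≤ L * ‖y - x‖ := fun z hz =>
    (hf.lipschitzWith_fderiv.norm_sub_le z x).trans
      (mul_le_mul_of_nonneg_left (mem_closedBall_iff_norm.1 hz) L.2)
  have hx : x ∈ Metric.closedBall x ‖y - x‖ := Metric.mem_closedBall_self (norm_nonneg _)
  have hy : y ∈ Metric.closedBall x ‖y - x‖ := mem_closedBall_iff_norm.2 le_rfl
  calc ‖f y - f x - fderiv ℝ f x (y - x)‖ ≤ L * ‖y - x‖ * ‖y - x‖ :=
        (convex_closedBall x ‖y - x‖).norm_image_sub_le_of_norm_fderiv_le' (𝕜 := ℝ)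
          (fun z _ => hf.differentiable z) hbound hx hy
    _ = L * ‖y - x‖ ^ 2 := by ring

theorem exists_isC11With {ι : Type*} {f : ι → E → G} (hf : ∀ i, ContDiff ℝ 2 (f i))
    (hf' : ∃ C, ∀ i y, ‖fderiv ℝ (f i) y‖ ≤ C)
    (hf'' : ∃ C, ∀ i y, ‖fderiv ℝ (fderiv ℝ (f i)) y‖ ≤ C) :
    ∃ K L : ℝ≥0, ∀ i, IsC11With K L (f i) := by
  obtain ⟨K, hK⟩ := hf'
  obtain ⟨L, hL⟩ := hf''
  have hdiff : ∀ i, Differentiable ℝ (f i) := fun i => (hf i).differentiable two_ne_zero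
  have hdiff' : ∀ i, Differentiable ℝ (fderiv ℝ (f i)) := fun i =>
    ((hf i).fderiv_right (m := 1) le_rfl).differentiable one_ne_zero
  exact ⟨K.toNNReal, L.toNNReal, fun i => ⟨hdiff i,
    lipschitzWith_of_nnnorm_fderiv_le (hdiff i) fun y => NNReal.le_toNNReal_of_coe_le (hK i y),
    lipschitzWith_of_nnnorm_fderiv_le (hdiff' i) fun y => NNReal.le_toNNReal_of_coe_le (hL i y)⟩⟩

theorem hasFDerivAt_of_norm_sub_sub_le_sq {f : E → G} {f' : E →L[ℝ] G} {x : E} {C : ℝ}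
    (h : ∀ y, ‖f y - f x - f' (y - x)‖ ≤ C * ‖y - x‖ ^ 2) : HasFDerivAt f f' x := by
  refine .of_isLittleO (Asymptotics.IsBigO.trans_isLittleO (g := fun y => ‖y - x‖ ^ 2) ?_
    (Asymptotics.isLittleO_pow_sub_sub x one_lt_two))
  exact .of_bound C (.of_forall fun y => by simpa using h y)

end SmoothMaps

section ControlField

variable {ι : Type*} [Fintype ι] {E : Type*} [NormedAddCommGroup E] [NormedSpace ℝ E]

theorem norm_sum_smul_le (a : EuclideanSpace ℝ ι) {v : ι → E} {C : ℝ} (hv : ∀ i, ‖v i‖ ≤ C) :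
    ‖∑ i, a i • v i‖ ≤ Fintype.card ι * ‖a‖ * C := by
  calc ‖∑ i, a i • v i‖ ≤ ∑ _i : ι, ‖a‖ * C := norm_sum_le_of_le _ fun i _ => by
        rw [norm_smul]
        exact mul_le_mul (PiLp.norm_apply_le a i) (hv i) (norm_nonneg _) (norm_nonneg a)
    _ = Fintype.card ι * ‖a‖ * C := by
      rw [Finset.sum_const, Finset.card_univ, nsmul_eq_mul, mul_assoc]

theorem lipschitzWith_sum_smul {D : Type*} [SeminormedAddCommGroup D] {f : ι → D → E} {K : ℝ≥0}
    (hf : ∀ i, LipschitzWith K (f i)) (a : EuclideanSpace ℝ ι) :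
    LipschitzWith (Fintype.card ι * ‖a‖₊ * K) fun y => ∑ i, a i • f i y :=
  .of_dist_le_mul fun y z => by
    rw [dist_eq_norm, ← Finset.sum_sub_distrib]
    simp only [← smul_sub]
    calc ‖∑ i, a i • (f i y - f i z)‖ ≤ Fintype.card ι * ‖a‖ * (K * dist y z) :=
          norm_sum_smul_le a fun i => dist_eq_norm (f i y) (f i z) ▸ (hf i).dist_le_mul y z
      _ = ↑(Fintype.card ι * ‖a‖₊ * K) * dist y z := by push_cast; ring

/-- The control-affine vector field `X₀ + ∑ᵢ aᵢ Xᵢ` with drift `X₀`, controlled fields `Xᵢ` and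
frozen control value `a`. -/
def controlField (X0 : E → E) (X : ι → E → E) (a : EuclideanSpace ℝ ι) (y : E) : E :=
  X0 y + ∑ i, a i • X i y

variable {X0 : E → E} {X : ι → E → E} {K0 L0 K L : ℝ≥0}

theorem controlField_sub_controlField (a b : EuclideanSpace ℝ ι) (y : E) :
    controlField X0 X b y - controlField X0 X a y = ∑ i, (b - a) i • X i y := by
  simp only [controlField, add_sub_add_left_eq_sub, ← Finset.sum_sub_distrib, ← sub_smul,
    PiLp.sub_apply]

theorem lipschitzWith_controlField (hX0 : LipschitzWith K0 X0) (hX : ∀ i, LipschitzWith K (X i))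
    (a : EuclideanSpace ℝ ι) :
    LipschitzWith (K0 + Fintype.card ι * ‖a‖₊ * K) (controlField X0 X a) :=
  hX0.add (lipschitzWith_sum_smul hX a)

theorem fderiv_controlField (hX0 : Differentiable ℝ X0) (hX : ∀ i, Differentiable ℝ (X i))
    (a : EuclideanSpace ℝ ι) (y : E) :
    fderiv ℝ (controlField X0 X a) y = fderiv ℝ X0 y + ∑ i, a i • fderiv ℝ (X i) y :=
  ((hX0 y).hasFDerivAt.add
    (HasFDerivAt.fun_sum fun i _ => (hX i y).hasFDerivAt.const_smul (a i))).fderiv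

theorem IsC11With.controlField (hX0 : IsC11With K0 L0 X0) (hX : ∀ i, IsC11With K L (X i))
    (a : EuclideanSpace ℝ ι) :
    IsC11With (K0 + Fintype.card ι * ‖a‖₊ * K) (L0 + Fintype.card ι * ‖a‖₊ * L)
      (controlField X0 X a) where
  differentiable := hX0.differentiable.add
    (Differentiable.fun_sum fun i _ => (hX i).differentiable.const_smul (a i))
  lipschitzWith := lipschitzWith_controlField hX0.lipschitzWith (fun i => (hX i).lipschitzWith) a
  lipschitzWith_fderiv := by
    rw [funext (fderiv_controlField hX0.differentiable (fun i => (hX i).differentiable) a)]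
    exact hX0.lipschitzWith_fderiv.add
      (lipschitzWith_sum_smul (fun i => (hX i).lipschitzWith_fderiv) a)

end ControlField

section CaratheodorySolutions

variable {E : Type*} [NormedAddCommGroup E] [NormedSpace ℝ E] {T : ℝ} {x : E}
  {f g : ℝ → E → E} {γ η : ℝ → E}

/-- Solutions on `[0, T]`, in integrated form, of the nonautonomous equation `γ' = f(t, γ)` with
`γ(0) = x`. Integrability of `s ↦ f s (γ s)` is not part of the definition; where it fails, the
integral takes its junk value `0`. -/
def IsCaratheodorySolution (f : ℝ → E → E) (x : E) (T : ℝ) (γ : ℝ → E) : Prop :=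
  ContinuousOn γ (Icc 0 T) ∧ ∀ t ∈ Icc 0 T, γ t = x + ∫ s in 0..t, f s (γ s)

theorem IsCaratheodorySolution.sub_eq_integral (hη : IsCaratheodorySolution g x T η)
    (hγ : IsCaratheodorySolution f x T γ)
    (hgη : IntervalIntegrable (fun s => g s (η s)) volume 0 T)
    (hfγ : IntervalIntegrable (fun s => f s (γ s)) volume 0 T) {t : ℝ} (ht : t ∈ Icc 0 T) :
    η t - γ t = ∫ s in 0..t, (g s (η s) - f s (γ s)) := by
  have hsub : uIcc 0 t ⊆ uIcc 0 T := uIcc_subset_uIcc_left (Icc_subset_uIcc ht)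
  rw [intervalIntegral.integral_sub (hgη.mono_set hsub) (hfγ.mono_set hsub), hη.2 t ht,
    hγ.2 t ht, add_sub_add_left_eq_sub]

theorem IsCaratheodorySolution.norm_sub_le {k : ℝ → ℝ≥0} {m : ℝ → ℝ}
    (hη : IsCaratheodorySolution g x T η) (hγ : IsCaratheodorySolution f x T γ)
    (hgη : IntervalIntegrable (fun s => g s (η s)) volume 0 T)
    (hfγ : IntervalIntegrable (fun s => f s (γ s)) volume 0 T)
    (hk : IntervalIntegrable (fun s => (k s : ℝ)) volume 0 T) (hm : IntervalIntegrable m volume 0 T)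
    (hf : ∀ s ∈ Icc 0 T, LipschitzWith (k s) (f s))
    (hgf : ∀ s ∈ Icc 0 T, ‖g s (η s) - f s (η s)‖ ≤ m s) {t : ℝ} (ht : t ∈ Icc 0 T) :
    ‖η t - γ t‖ ≤ (∫ s in 0..T, m s) * Real.exp (∫ s in 0..T, (k s : ℝ)) := by
  have hT : 0 ≤ T := ht.1.trans ht.2
  have hm0 : ∀ s ∈ Icc 0 T, 0 ≤ m s := fun s hs => (norm_nonneg _).trans (hgf s hs)
  have hkδ : IntervalIntegrable (fun s => k s * ‖η s - γ s‖) volume 0 T :=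
    hk.mul_continuousOn (uIcc_of_le hT ▸ (hη.1.sub hγ.1).norm)
  have hae : 0 ≤ᵐ[volume.restrict (Ioc 0 T)] m :=
    ae_restrict_of_forall_mem measurableSet_Ioc fun s hs => hm0 s (Ioc_subset_Icc_self hs)
  have hpointwise : ∀ s ∈ Icc 0 T, ‖g s (η s) - f s (γ s)‖ ≤ m s + k s * ‖η s - γ s‖ :=
    fun s hs => norm_sub_le_norm_sub_add_norm_sub .. |>.trans
      (add_le_add (hgf s hs) ((hf s hs).norm_sub_le _ _))
  have hgronwall : ∀ r ∈ Icc 0 T,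
      ‖η r - γ r‖ ≤ (∫ s in 0..T, m s) + ∫ s in 0..r, k s * ‖η s - γ s‖ := by
    intro r hr
    have hsub : uIcc 0 r ⊆ uIcc 0 T := uIcc_subset_uIcc_left (Icc_subset_uIcc hr)
    calc ‖η r - γ r‖ ≤ ∫ s in 0..r, (m s + k s * ‖η s - γ s‖) := by
          rw [hη.sub_eq_integral hγ hgη hfγ hr]
          exact intervalIntegral.norm_integral_le_of_norm_le hr.1
            (.of_forall fun s hs => hpointwise s ⟨hs.1.le, hs.2.trans hr.2⟩)
            ((hm.add hkδ).mono_set hsub)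
      _ = (∫ s in 0..r, m s) + ∫ s in 0..r, k s * ‖η s - γ s‖ :=
          intervalIntegral.integral_add (hm.mono_set hsub) (hkδ.mono_set hsub)
      _ ≤ _ := by
          gcongr
          exact intervalIntegral.integral_mono_interval le_rfl hr.1 hr.2 hae hm
  calc ‖η t - γ t‖ ≤ (∫ s in 0..T, m s) * Real.exp (∫ s in 0..t, (k s : ℝ)) :=
        le_mul_exp_integral_of_le_add_integral hk hkδ (fun s _ => (k s).2) hgronwall ht
    _ ≤ _ := by
        gcongr
        · exact intervalIntegral.integral_nonneg hT hm0
        · exact intervalIntegral.integral_mono_interval le_rfl ht.1 ht.2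
            (.of_forall fun s => (k s).2) hk

/-- The continuous operator-valued solution of the backward equation `N(t) = I + ∫ₜᵀ N(s) A(s) ds`,
that is `N(t) = Φ(T, t)` for the resolvent `Φ` of the linear equation `δ' = A(t) δ`. -/
def IsBackwardResolvent (A : ℝ → E →L[ℝ] E) (T : ℝ) (N : ℝ → E →L[ℝ] E) : Prop :=
  ContinuousOn N (Icc 0 T) ∧
    ∀ t ∈ Icc 0 T, N t = ContinuousLinearMap.id ℝ E + ∫ s in t..T, (N s).comp (A s)

variable [CompleteSpace E]

theorem IsBackwardResolvent.integral_apply_sub {A N : ℝ → E →L[ℝ] E} {δ h : ℝ → E}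
    (hN : IsBackwardResolvent A T N) (hT : 0 ≤ T) (hA : IntervalIntegrable A volume 0 T)
    (hh : IntervalIntegrable h volume 0 T) (hδ : ∀ t ∈ Icc 0 T, δ t = ∫ s in 0..t, h s) :
    ∫ s in 0..T, N s (h s - A s (δ s)) = δ T := by
  have hNc : ContinuousOn N (uIcc 0 T) := uIcc_of_le hT ▸ hN.1
  have hδc : ContinuousOn δ (uIcc 0 T) :=
    (intervalIntegral.continuousOn_primitive_interval' hh left_mem_uIcc).congr fun t ht =>
      hδ t (uIcc_of_le hT ▸ ht)
  have hNA : IntervalIntegrable (fun s => (N s).comp (A s)) volume 0 T :=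
    intervalIntegrable_bilin (ContinuousLinearMap.compL ℝ E E E) hNc hA
  have hNh : IntervalIntegrable (fun s => N s (h s)) volume 0 T :=
    intervalIntegrable_bilin (.id ℝ (E →L[ℝ] E)) hNc hh
  have hNAδ : IntervalIntegrable (fun s => (N s).comp (A s) (δ s)) volume 0 T :=
    intervalIntegrable_bilin (f := δ) (ContinuousLinearMap.id ℝ (E →L[ℝ] E)).flip hδc hNA
  have hsplit : ∀ s ∈ uIcc 0 T, N s (h s) - h s = (∫ t in s..T, (N t).comp (A t)) (h s) := by
    intro s hs
    nth_rw 1 [hN.2 s (uIcc_of_le hT ▸ hs)]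
    rw [add_apply, ContinuousLinearMap.id_apply, add_sub_cancel_left]
  have hfubini : (∫ s in 0..T, N s (h s)) - δ T = ∫ s in 0..T, (N s).comp (A s) (δ s) := by
    rw [hδ T ⟨hT, le_rfl⟩, ← intervalIntegral.integral_sub hNh hh,
      intervalIntegral.integral_congr hsplit, integral_integral_clm_apply_eq hT hNA hh]
    exact intervalIntegral.integral_congr fun s hs => by rw [hδ s (uIcc_of_le hT ▸ hs)]
  calc ∫ s in 0..T, N s (h s - A s (δ s))
      = (∫ s in 0..T, N s (h s)) - ∫ s in 0..T, (N s).comp (A s) (δ s) := by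
        simp only [map_sub, ← ContinuousLinearMap.comp_apply]
        exact intervalIntegral.integral_sub hNh hNAδ
    _ = δ T := by rw [← hfubini, sub_sub_cancel]

theorem IsBackwardResolvent.norm_sub_sub_integral_le {N : ℝ → E →L[ℝ] E} {k l j : ℝ → ℝ≥0}
    {C R : ℝ} (hN : IsBackwardResolvent (fun s => fderiv ℝ (f s) (γ s)) T N) (hT : 0 ≤ T)
    (hη : IsCaratheodorySolution g x T η) (hγ : IsCaratheodorySolution f x T γ)
    (hgη : IntervalIntegrable (fun s => g s (η s)) volume 0 T)
    (hgγ : IntervalIntegrable (fun s => g s (γ s)) volume 0 T)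
    (hfγ : IntervalIntegrable (fun s => f s (γ s)) volume 0 T)
    (hfγ' : IntervalIntegrable (fun s => fderiv ℝ (f s) (γ s)) volume 0 T)
    (hl : IntervalIntegrable (fun s => (l s : ℝ)) volume 0 T)
    (hj : IntervalIntegrable (fun s => (j s : ℝ)) volume 0 T)
    (hf : ∀ s ∈ Icc 0 T, IsC11With (k s) (l s) (f s))
    (hgf : ∀ s ∈ Icc 0 T, LipschitzWith (j s) fun y => g s y - f s y)
    (hC : ∀ s ∈ Icc 0 T, ‖N s‖ ≤ C) (hR : ∀ s ∈ Icc 0 T, ‖η s - γ s‖ ≤ R) :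
    ‖η T - γ T - ∫ s in 0..T, N s (g s (γ s) - f s (γ s))‖ ≤
      C * (R ^ 2 * (∫ s in 0..T, (l s : ℝ)) + R * ∫ s in 0..T, (j s : ℝ)) := by
  set A : ℝ → E →L[ℝ] E := fun s => fderiv ℝ (f s) (γ s)
  set δ : ℝ → E := fun s => η s - γ s
  set h : ℝ → E := fun s => g s (η s) - f s (γ s) with hh
  have hNc : ContinuousOn N (uIcc 0 T) := uIcc_of_le hT ▸ hN.1
  have hδc : ContinuousOn δ (uIcc 0 T) := uIcc_of_le hT ▸ hη.1.sub hγ.1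
  have hN_int : ∀ {e : ℝ → E}, IntervalIntegrable e volume 0 T →
      IntervalIntegrable (fun s => N s (e s)) volume 0 T :=
    fun he => intervalIntegrable_bilin (.id ℝ (E →L[ℝ] E)) hNc he
  have hAδ : IntervalIntegrable (fun s => A s (δ s)) volume 0 T :=
    intervalIntegrable_bilin (ContinuousLinearMap.id ℝ (E →L[ℝ] E)).flip hδc hfγ'
  have hremainder : ∀ s ∈ Icc 0 T,
      ‖h s - A s (δ s) - (g s (γ s) - f s (γ s))‖ ≤ R ^ 2 * l s + R * j s := by
    intro s hs
    calc ‖h s - A s (δ s) - (g s (γ s) - f s (γ s))‖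
        = ‖(f s (η s) - f s (γ s) - A s (δ s)) +
            ((g s (η s) - f s (η s)) - (g s (γ s) - f s (γ s)))‖ := by
          congr 1; simp only [hh]; abel
      _ ≤ l s * ‖δ s‖ ^ 2 + j s * ‖δ s‖ := (norm_add_le _ _).trans
          (add_le_add ((hf s hs).norm_sub_sub_fderiv_le _ _) ((hgf s hs).norm_sub_le _ _))
      _ ≤ l s * R ^ 2 + j s * R := by gcongr <;> exact hR s hs
      _ = R ^ 2 * l s + R * j s := by ring
  have hduhamel : δ T - ∫ s in 0..T, N s (g s (γ s) - f s (γ s)) =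
      ∫ s in 0..T, N s (h s - A s (δ s) - (g s (γ s) - f s (γ s))) := by
    simp_rw [map_sub (N _) (h _ - A _ (δ _))]
    rw [intervalIntegral.integral_sub (hN_int ((hgη.sub hfγ).sub hAδ)) (hN_int (hgγ.sub hfγ)),
      hN.integral_apply_sub hT hfγ' (hgη.sub hfγ) fun t ht => hη.sub_eq_integral hγ hgη hfγ ht]
  rw [hduhamel, ← intervalIntegral.integral_const_mul, ← intervalIntegral.integral_const_mul,
    ← intervalIntegral.integral_add (hl.const_mul _) (hj.const_mul _),
    ← intervalIntegral.integral_const_mul]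
  refine intervalIntegral.norm_integral_le_of_norm_le hT (.of_forall fun s hs => ?_)
    (((hl.const_mul _).add (hj.const_mul _)).const_mul C)
  have hs' : s ∈ Icc 0 T := Ioc_subset_Icc_self hs
  exact (N s).le_of_opNorm_le_of_le (hC s hs') (hremainder s hs')

end CaratheodorySolutions

section EndpointMap

variable {ι : Type*} [Fintype ι] {E : Type*} [NormedAddCommGroup E] [NormedSpace ℝ E] {T : ℝ}
  {x : E} {X0 : E → E} {X : ι → E → E} {K0 L0 K L : ℝ≥0}

theorem intervalIntegrable_add_sum_smul {G : Type*} [NormedAddCommGroup G] [NormedSpace ℝ G]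
    {a b : ℝ} {u : ℝ → EuclideanSpace ℝ ι} {f0 : ℝ → G} {f : ι → ℝ → G}
    (hu : IntervalIntegrable u volume a b) (hf0 : ContinuousOn f0 (uIcc a b))
    (hf : ∀ i, ContinuousOn (f i) (uIcc a b)) :
    IntervalIntegrable (fun s => f0 s + ∑ i, u s i • f i s) volume a b := by
  have hui : ∀ i, IntervalIntegrable (fun s => u s i) volume a b := fun i =>
    ⟨(EuclideanSpace.proj (𝕜 := ℝ) i).integrable_comp hu.1,
      (EuclideanSpace.proj (𝕜 := ℝ) i).integrable_comp hu.2⟩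
  exact hf0.intervalIntegrable.add
    (by simpa only [Finset.sum_fn] using
      IntervalIntegrable.sum Finset.univ fun i _ => (hui i).smul_continuousOn (hf i))

theorem intervalIntegrable_controlField {a b : ℝ} {u : ℝ → EuclideanSpace ℝ ι} {γ : ℝ → E}
    (hX0 : Continuous X0) (hX : ∀ i, Continuous (X i)) (hu : IntervalIntegrable u volume a b)
    (hγ : ContinuousOn γ (uIcc a b)) :
    IntervalIntegrable (fun s => controlField X0 X (u s) (γ s)) volume a b :=
  intervalIntegrable_add_sum_smul hu (hX0.comp_continuousOn hγ) fun i => (hX i).comp_continuousOn hγ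

theorem intervalIntegrable_fderiv_controlField {a b : ℝ} {u : ℝ → EuclideanSpace ℝ ι} {γ : ℝ → E}
    (hX0 : IsC11With K0 L0 X0) (hX : ∀ i, IsC11With K L (X i))
    (hu : IntervalIntegrable u volume a b) (hγ : ContinuousOn γ (uIcc a b)) :
    IntervalIntegrable (fun s => fderiv ℝ (controlField X0 X (u s)) (γ s)) volume a b := by
  simp only [fderiv_controlField hX0.differentiable fun i => (hX i).differentiable]
  exact intervalIntegrable_add_sum_smul hu
    (hX0.lipschitzWith_fderiv.continuous.comp_continuousOn hγ)
    fun i => (hX i).lipschitzWith_fderiv.continuous.comp_continuousOn hγ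

theorem intervalIntegrable_coe_mul_nnnorm_mul {V : Type*} [NormedAddCommGroup V] {a b : ℝ}
    {u : ℝ → V} (hu : IntervalIntegrable u volume a b) (c₁ c₂ : ℝ≥0) :
    IntervalIntegrable (fun s => ((c₁ * ‖u s‖₊ * c₂ : ℝ≥0) : ℝ)) volume a b := by
  simpa only [NNReal.coe_mul, coe_nnnorm] using (hu.norm.const_mul _).mul_const _

theorem exists_norm_trajectory_sub_le {B : ℝ} (hX0 : LipschitzWith K0 X0)
    (hX : ∀ i, LipschitzWith K (X i)) (hB : ∀ i y, ‖X i y‖ ≤ B) {u : ℝ → EuclideanSpace ℝ ι}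
    (hu : IntervalIntegrable u volume 0 T) {γ : ℝ → E}
    (hγ : IsCaratheodorySolution (fun s => controlField X0 X (u s)) x T γ) :
    ∃ A, ∀ (w : ℝ → EuclideanSpace ℝ ι) (η : ℝ → E), IntervalIntegrable w volume 0 T →
      IsCaratheodorySolution (fun s => controlField X0 X (w s)) x T η →
      ∀ t ∈ Icc 0 T, ‖η t - γ t‖ ≤ A * ∫ s in 0..T, ‖w s - u s‖ := by
  refine ⟨Fintype.card ι * B *
    Real.exp (∫ s in 0..T, ((K0 + Fintype.card ι * ‖u s‖₊ * K : ℝ≥0) : ℝ)),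
    fun w η hw hη t ht => ?_⟩
  have hT : uIcc 0 T = Icc 0 T := uIcc_of_le (ht.1.trans ht.2)
  have hXc : ∀ i, Continuous (X i) := fun i => (hX i).continuous
  have hsource : ∀ s ∈ Icc 0 T, ‖controlField X0 X (w s) (η s) - controlField X0 X (u s) (η s)‖ ≤
      Fintype.card ι * ‖w s - u s‖ * B := fun s _ => by
    rw [controlField_sub_controlField]
    exact norm_sum_smul_le (w s - u s) fun i => hB i (η s)
  calc ‖η t - γ t‖ ≤ (∫ s in 0..T, Fintype.card ι * ‖w s - u s‖ * B) *
        Real.exp (∫ s in 0..T, ((K0 + Fintype.card ι * ‖u s‖₊ * K : ℝ≥0) : ℝ)) :=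
        hη.norm_sub_le hγ
          (intervalIntegrable_controlField hX0.continuous hXc hw (hT ▸ hη.1))
          (intervalIntegrable_controlField hX0.continuous hXc hu (hT ▸ hγ.1))
          (intervalIntegrable_const.add (intervalIntegrable_coe_mul_nnnorm_mul hu _ K))
          (((hw.sub hu).norm.const_mul _).mul_const _)
          (fun s _ => lipschitzWith_controlField hX0 hX (u s)) hsource ht
    _ = _ := by
        rw [intervalIntegral.integral_mul_const, intervalIntegral.integral_const_mul]
        ring

variable [CompleteSpace E]

theorem exists_norm_sub_sub_integral_le_mul_sq {B : ℝ} (hX0 : IsC11With K0 L0 X0)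
    (hX : ∀ i, IsC11With K L (X i)) (hB : ∀ i y, ‖X i y‖ ≤ B) (hT : 0 ≤ T)
    {u : ℝ → EuclideanSpace ℝ ι} (hu : IntervalIntegrable u volume 0 T) {γ : ℝ → E}
    (hγ : IsCaratheodorySolution (fun s => controlField X0 X (u s)) x T γ) {N : ℝ → E →L[ℝ] E}
    (hN : IsBackwardResolvent
      (fun s => fderiv ℝ X0 (γ s) + ∑ i, u s i • fderiv ℝ (X i) (γ s)) T N) :
    ∃ C, ∀ (w : ℝ → EuclideanSpace ℝ ι) (η : ℝ → E), IntervalIntegrable w volume 0 T →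
      IsCaratheodorySolution (fun s => controlField X0 X (w s)) x T η →
      ‖η T - γ T - ∫ s in 0..T, N s (∑ i, (w s - u s) i • X i (γ s))‖ ≤
        C * (∫ s in 0..T, ‖w s - u s‖) ^ 2 := by
  have hTIcc : uIcc 0 T = Icc 0 T := uIcc_of_le hT
  have hXc : ∀ i, Continuous (X i) := fun i => (hX i).differentiable.continuous
  have hf : ∀ {w : ℝ → EuclideanSpace ℝ ι} {η : ℝ → E}, IntervalIntegrable w volume 0 T →
      ContinuousOn η (Icc 0 T) →
      IntervalIntegrable (fun s => controlField X0 X (w s) (η s)) volume 0 T := fun hw hη =>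
    intervalIntegrable_controlField hX0.differentiable.continuous hXc hw (hTIcc ▸ hη)
  have hN' : IsBackwardResolvent (fun s => fderiv ℝ (controlField X0 X (u s)) (γ s)) T N := by
    simpa only [fderiv_controlField hX0.differentiable fun i => (hX i).differentiable] using hN
  obtain ⟨M, hM⟩ := isCompact_Icc.exists_bound_of_continuousOn hN.1
  obtain ⟨A, hA⟩ := exists_norm_trajectory_sub_le hX0.lipschitzWith
    (fun i => (hX i).lipschitzWith) hB hu hγ
  refine ⟨M * (A ^ 2 * (∫ s in 0..T, ((L0 + Fintype.card ι * ‖u s‖₊ * L : ℝ≥0) : ℝ)) +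
    A * (Fintype.card ι * K)), fun w η hw hη => ?_⟩
  have hj : ∫ s in 0..T, ((Fintype.card ι * ‖w s - u s‖₊ * K : ℝ≥0) : ℝ) =
      Fintype.card ι * K * ∫ s in 0..T, ‖w s - u s‖ := by
    simp only [NNReal.coe_mul, NNReal.coe_natCast, coe_nnnorm]
    rw [intervalIntegral.integral_mul_const, intervalIntegral.integral_const_mul, mul_right_comm]
  have hgf : ∀ s, LipschitzWith (Fintype.card ι * ‖w s - u s‖₊ * K)
      fun y => controlField X0 X (w s) y - controlField X0 X (u s) y := fun s => by
    simpa only [controlField_sub_controlField] using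
      lipschitzWith_sum_smul (fun i => (hX i).lipschitzWith) (w s - u s)
  have hlin := hN'.norm_sub_sub_integral_le hT hη hγ (hf hw hη.1) (hf hw hγ.1) (hf hu hγ.1)
    (intervalIntegrable_fderiv_controlField hX0 hX hu (hTIcc ▸ hγ.1))
    (intervalIntegrable_const.add (intervalIntegrable_coe_mul_nnnorm_mul hu _ L))
    (intervalIntegrable_coe_mul_nnnorm_mul (hw.sub hu) _ K)
    (fun s _ => hX0.controlField hX (u s)) (fun s _ => hgf s) hM (hA w η hw hη)
  simp only [controlField_sub_controlField, hj] at hlin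
  exact hlin.trans_eq (by ring)

theorem ae_mem_uIoc_coeFn_sub {V : Type*} [NormedAddCommGroup V] {p : ℝ≥0∞} (hT : 0 ≤ T)
    (w u : Lp V p (volume.restrict (Icc 0 T))) :
    ∀ᵐ s, s ∈ uIoc 0 T → (w - u) s = w s - u s := by
  rw [uIoc_of_le hT, ← ae_restrict_iff' measurableSet_Ioc, restrict_Ioc_eq_restrict_Icc]
  exact Lp.coeFn_sub w u

variable {p : ℝ≥0∞} [Fact (1 ≤ p)]

theorem exists_clm_Lp_eq_integral_sum_smul (hT : 0 ≤ T) {N : ℝ → E →L[ℝ] E} {Y : ι → ℝ → E}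
    (hN : ContinuousOn N (Icc 0 T)) (hY : ∀ i, ContinuousOn (Y i) (Icc 0 T)) :
    ∃ D : Lp (EuclideanSpace ℝ ι) p (volume.restrict (Icc 0 T)) →L[ℝ] E,
      ∀ v, D v = ∫ s in 0..T, N s (∑ i, v s i • Y i s) := by
  let M : ℝ → EuclideanSpace ℝ ι →L[ℝ] E := fun s =>
    ∑ i, (EuclideanSpace.proj (𝕜 := ℝ) i).smulRight (N s (Y i s))
  have hM : ContinuousOn M (Icc 0 T) := by
    refine continuousOn_finsetSum _ fun i _ => ?_
    exact ((ContinuousLinearMap.smulRightL ℝ _ E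
      (EuclideanSpace.proj i)).continuous.comp_continuousOn (hN.clm_apply (hY i)))
  obtain ⟨C, hC⟩ := isCompact_Icc.exists_bound_of_continuousOn hM
  have : Fact (1 ≤ ENNReal.conjExponent p) := ⟨ENNReal.HolderConjugate.one_le _ p⟩
  have hM' : MemLp M (ENNReal.conjExponent p) (volume.restrict (Icc 0 T)) :=
    .of_bound (hM.aestronglyMeasurable measurableSet_Icc) C
      ((ae_restrict_mem measurableSet_Icc).mono hC)
  obtain ⟨D, hD⟩ := exists_clm_Lp_eq_integral_of_memLp (p := p) hM'
  refine ⟨D, fun v => ?_⟩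
  rw [hD, intervalIntegral.integral_of_le hT, integral_Icc_eq_integral_Ioc]
  simp [M]

theorem exists_forall_integral_norm_sub_le_mul_norm_Lp (hT : 0 ≤ T) {V : Type*}
    [NormedAddCommGroup V] :
    ∃ C : ℝ, ∀ w u : Lp V p (volume.restrict (Icc 0 T)),
      ∫ s in 0..T, ‖w s - u s‖ ≤ C * ‖w - u‖ := by
  obtain ⟨C, hC⟩ := exists_forall_integral_norm_le_mul_norm_Lp
    (V := V) (p := p) (μ := volume.restrict (Icc 0 T))
  refine ⟨C, fun w u => Eq.trans_le ?_ (hC (w - u))⟩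
  rw [integral_Icc_eq_integral_Ioc, ← intervalIntegral.integral_of_le hT]
  refine intervalIntegral.integral_congr_ae ((ae_mem_uIoc_coeFn_sub hT w u).mono ?_)
  exact fun s h hs => by rw [h hs]

theorem stmt9_general (hT : 0 ≤ T) (hX0 : IsC11With K0 L0 X0) (hX : ∀ i, IsC11With K L (X i))
    (hXbdd : ∃ B, ∀ i y, ‖X i y‖ ≤ B)
    {F : Lp (EuclideanSpace ℝ ι) p (volume.restrict (Icc 0 T)) → E}
    (hF : ∀ u : Lp (EuclideanSpace ℝ ι) p (volume.restrict (Icc 0 T)),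
      ∃ γ, IsCaratheodorySolution (fun s => controlField X0 X (u s)) x T γ ∧ F u = γ T)
    (u : Lp (EuclideanSpace ℝ ι) p (volume.restrict (Icc 0 T))) {γ : ℝ → E}
    (hγ : IsCaratheodorySolution (fun s => controlField X0 X (u s)) x T γ) {N : ℝ → E →L[ℝ] E}
    (hN : IsBackwardResolvent
      (fun s => fderiv ℝ X0 (γ s) + ∑ i, u s i • fderiv ℝ (X i) (γ s)) T N) :
    ∃ D : Lp (EuclideanSpace ℝ ι) p (volume.restrict (Icc 0 T)) →L[ℝ] E,
      HasFDerivAt F D u ∧ ∀ v, D v = ∫ s in 0..T, N s (∑ i, v s i • X i (γ s)) := by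
  obtain ⟨B, hB⟩ := hXbdd
  have hLp : ∀ v : Lp (EuclideanSpace ℝ ι) p (volume.restrict (Icc 0 T)),
      IntervalIntegrable v volume 0 T := fun v =>
    (intervalIntegrable_iff_integrableOn_Icc_of_le hT).2 ((Lp.memLp v).integrable Fact.out)
  obtain ⟨D, hD⟩ := exists_clm_Lp_eq_integral_sum_smul (p := p)
    (Y := fun i s => X i (γ s)) hT hN.1
    fun i => (hX i).differentiable.continuous.comp_continuousOn hγ.1
  obtain ⟨C, hC⟩ := exists_norm_sub_sub_integral_le_mul_sq hX0 hX hB hT (hLp u) hγ hN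
  obtain ⟨C', hC'⟩ := exists_forall_integral_norm_sub_le_mul_norm_Lp
    (V := EuclideanSpace ℝ ι) (p := p) hT
  have hDsub : ∀ w : Lp (EuclideanSpace ℝ ι) p (volume.restrict (Icc 0 T)),
      D (w - u) = ∫ s in 0..T, N s (∑ i, (w s - u s) i • X i (γ s)) := fun w => by
    rw [hD]
    refine intervalIntegral.integral_congr_ae ((ae_mem_uIoc_coeFn_sub hT w u).mono ?_)
    exact fun s h hs => by rw [h hs]
  have hquad : ∀ (w : Lp (EuclideanSpace ℝ ι) p (volume.restrict (Icc 0 T))) (η : ℝ → E),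
      IsCaratheodorySolution (fun s => controlField X0 X (w s)) x T η →
      ‖η T - γ T - D (w - u)‖ ≤ |C| * C' ^ 2 * ‖w - u‖ ^ 2 := fun w η hη => by
    calc ‖η T - γ T - D (w - u)‖ ≤ C * (∫ s in 0..T, ‖w s - u s‖) ^ 2 :=
          hDsub w ▸ hC w η (hLp w) hη
      _ ≤ |C| * (C' * ‖w - u‖) ^ 2 := by
        have hI : 0 ≤ ∫ s in 0..T, ‖w s - u s‖ :=
          intervalIntegral.integral_nonneg hT fun s _ => norm_nonneg _
        gcongr
        exacts [le_abs_self C, hC' w u]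
      _ = |C| * C' ^ 2 * ‖w - u‖ ^ 2 := by ring
  have hFu : F u = γ T := by
    obtain ⟨η, hη, hFη⟩ := hF u
    simpa [← hFη, sub_eq_zero] using hquad u η hη
  refine ⟨D, hasFDerivAt_of_norm_sub_sub_le_sq (C := |C| * C' ^ 2) fun w => ?_, hD⟩
  obtain ⟨η, hη, hFη⟩ := hF w
  rw [hFη, hFu]
  exact hquad w η hη

end EndpointMap

/-- differentiability of the endpoint map `F(u) = γ_u(T)`. With
`A_u(s) = DX₀(γ_u(s)) + Σᵢ uᵢ(s) DXᵢ(γ_u(s))` and `N` the continuous solution of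
`N(t) = I + ∫ₜ^T N(s)A_u(s) ds`, the map `F` is Fréchet differentiable at `u` with
differential `v ↦ ∫₀^T N(s)(Σᵢ vᵢ(s) Xᵢ(γ_u(s))) ds`. -/
theorem stmt9 (n d : ℕ) (p : ℝ) (hp : 1 < p) [Fact (1 ≤ ENNReal.ofReal p)]
    (T : ℝ) (hT : 0 < T) (x : EuclideanSpace ℝ (Fin n))
    (X0 : EuclideanSpace ℝ (Fin n) → EuclideanSpace ℝ (Fin n))
    (X : Fin d → EuclideanSpace ℝ (Fin n) → EuclideanSpace ℝ (Fin n))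
    (hX0smooth : ContDiff ℝ (⊤ : ℕ∞) X0) (hXsmooth : ∀ i, ContDiff ℝ (⊤ : ℕ∞) (X i))
    (hX0bdd : ∃ C, ∀ y, ‖X0 y‖ ≤ C) (hXbdd : ∃ C, ∀ i y, ‖X i y‖ ≤ C)
    (hX0der : ∃ C, ∀ y, ‖fderiv ℝ X0 y‖ ≤ C)
    (hXder : ∃ C, ∀ i y, ‖fderiv ℝ (X i) y‖ ≤ C)
    (hX0der2 : ∃ C, ∀ y, ‖fderiv ℝ (fderiv ℝ X0) y‖ ≤ C)
    (hXder2 : ∃ C, ∀ i y, ‖fderiv ℝ (fderiv ℝ (X i)) y‖ ≤ C)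
    (F : Lp (EuclideanSpace ℝ (Fin d)) (ENNReal.ofReal p)
        (volume.restrict (Set.Icc (0:ℝ) T)) → EuclideanSpace ℝ (Fin n))
    (hF : ∀ u : Lp (EuclideanSpace ℝ (Fin d)) (ENNReal.ofReal p)
        (volume.restrict (Set.Icc (0:ℝ) T)),
      ∃ γ, IsTrajectory X0 X x T (⇑u) γ ∧ F u = γ T)
    (u : Lp (EuclideanSpace ℝ (Fin d)) (ENNReal.ofReal p)
      (volume.restrict (Set.Icc (0:ℝ) T)))
    (γu : ℝ → EuclideanSpace ℝ (Fin n))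
    (hγu : IsTrajectory X0 X x T (⇑u) γu)
    (N : ℝ → (EuclideanSpace ℝ (Fin n) →L[ℝ] EuclideanSpace ℝ (Fin n)))
    (hNcont : ContinuousOn N (Set.Icc 0 T))
    (hN : ∀ t ∈ Set.Icc (0:ℝ) T,
      N t = ContinuousLinearMap.id ℝ (EuclideanSpace ℝ (Fin n)) +
        ∫ s in t..T, (N s).comp
          (fderiv ℝ X0 (γu s) + ∑ i, u s i • fderiv ℝ (X i) (γu s))) :
    ∃ D : Lp (EuclideanSpace ℝ (Fin d)) (ENNReal.ofReal p)
        (volume.restrict (Set.Icc (0:ℝ) T)) →L[ℝ] EuclideanSpace ℝ (Fin n),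
      HasFDerivAt F D u ∧
      ∀ v, D v = ∫ s in (0:ℝ)..T, N s (∑ i, v s i • X i (γu s)) := by
  obtain ⟨K0, L0, hX0⟩ := exists_isC11With (ι := Unit)
    (fun _ => hX0smooth.of_le (WithTop.coe_le_coe.2 le_top))
    (hX0der.imp fun _ h _ => h) (hX0der2.imp fun _ h _ => h)
  obtain ⟨K, L, hX⟩ := exists_isC11With
    (fun i => (hXsmooth i).of_le (WithTop.coe_le_coe.2 le_top)) hXder hXder2
  exact stmt9_general hT.le (hX0 ()) hX hXbdd hF u hγu ⟨hNcont, hN⟩
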